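/- Let V be an 𝔽_q-vector space of dimension n and x ∈ End(V) a nilpotent endomorphism of Jordan type λ ⊢ n. Then the order of the centralizer of x in GL(V) equals q^{⟨λ,λ⟩}·∏_k ∏_{j=1}^{m_k(λ)} (1 − q^{-j}), where ⟨λ,λ⟩ = ∑_{i,j} min(i,j)·m_i(λ)·m_j(λ). -/

import Mathlib

/-- The pairing `⟨λ,μ⟩ = ∑_{i,j} min(i,j) mᵢ(λ) mⱼ(μ)`. -/
def partitionPairing (μ ν : Multiset ℕ) : ℕ :=
  (μ.map fun a => (ν.map fun b => min a b).sum).sum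

/-- A nilpotent endomorphism has Jordan type `λ` iff for every `k`,
`dim ker(x^k) = ∑_{parts p of λ} min(p,k)`. -/
def HasJordanType {K : Type*} [Field K] {V : Type*} [AddCommGroup V] [Module K V]
    {n : ℕ} (x : Module.End K V) (lam : Nat.Partition n) : Prop :=
  IsNilpotent x ∧
    ∀ k : ℕ, Module.finrank K (LinearMap.ker (x ^ k)) = (lam.parts.map fun p => min p k).sum

/-!
A nilpotent `x` turns `V` into a sum of Jordan chains, and a chain is known once its generator is.
Fix generators `v i` of chains of lengths `p i`, the parts of `λ`. An automorphism commuting with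
`x` sends them to generators of the same kind, and every such choice of images arises from exactly
one automorphism, so the centralizer has as many elements as there are families `v` with
`x ^ p i (v i) = 0` and the vectors `x ^ (p i - 1) (v i)` linearly independent.

To count these families, order the parts decreasingly. The subspaces
`ker x ⊓ range (x ^ (p i - 1))` containing the ends of the chains then increase with `i`, so the
`v i` can be chosen one after the other, with
`q ^ dim ker (x ^ p i) - q ^ (dim ker (x ^ (p i - 1)) + i)` choices for `v i`, where `i` starts
from `0`. The exponents `dim ker (x ^ p i)` add up to `⟨λ,λ⟩`. The difference of the two exponents
is one plus the number of later parts equal to `p i`; over the indices with `p i = k` it runs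
through `1, …, m_k(λ)`. Since no factor vanishes, generators exist.
-/

open Finset Module

section FiniteSums

variable {ι α M : Type*}

theorem prod_card_filter_lt_eq_prod_range [LinearOrder ι] [CommMonoid M] (F : ℕ → M)
    (s : Finset ι) :
    ∏ i ∈ s, F #{j ∈ s | i < j} = ∏ m ∈ range #s, F m := by
  induction s using Finset.induction_on_min with
  | empty => simp
  | insert a s ha ih =>
    have ha' : a ∉ s := fun h => (ha a h).false
    have key : ∀ i ∈ s, {j ∈ insert a s | i < j} = {j ∈ s | i < j} := fun i hi => by
      rw [filter_insert, if_neg (ha i hi).not_gt]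
    have key_min : {j ∈ insert a s | a < j} = s := by
      rw [filter_insert, if_neg (lt_irrefl a), filter_true_of_mem ha]
    rw [prod_insert ha', key_min, prod_congr rfl fun i hi => congrArg (F #·) (key i hi), ih,
      card_insert_of_notMem ha', prod_range_succ_comm]

theorem prod_card_filter_eq_lt_eq_prod_fiberwise [LinearOrder ι] [Fintype ι] [DecidableEq α]
    [CommMonoid M] (F : ℕ → M) (p : ι → α) {t : Finset α} (ht : ∀ i, p i ∈ t) :
    ∏ i, F #{j | p j = p i ∧ i < j} = ∏ k ∈ t, ∏ m ∈ range #{i | p i = k}, F m := by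
  rw [← prod_fiberwise_of_maps_to fun i _ => ht i]
  refine prod_congr rfl fun k _ => ?_
  rw [← prod_card_filter_lt_eq_prod_range]
  refine prod_congr rfl fun i hi => ?_
  rw [filter_filter, (mem_filter.1 hi).2]

theorem card_filter_ge_of_antitone [LinearOrder α] {r : ℕ} {p : Fin r → α} (hp : Antitone p)
    (i : Fin r) : #{j | p i ≤ p j} = i + 1 + #{j | p j = p i ∧ i < j} := by
  have hsplit : ({j | p i ≤ p j} : Finset (Fin r)) =
      Iic i ∪ ({j | p j = p i ∧ i < j} : Finset _) := by
    ext j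
    simp only [mem_filter_univ, mem_union, mem_Iic]
    refine ⟨fun hij => (le_or_gt j i).imp_right fun h => ⟨(hp h.le).antisymm hij, h⟩, ?_⟩
    rintro (h | h)
    exacts [hp h, h.1.ge]
  have hdisj : Disjoint (Iic i) ({j | p j = p i ∧ i < j} : Finset _) :=
    disjoint_left.2 fun j hj hj' => (mem_Iic.1 hj).not_gt ((mem_filter_univ j).1 hj').2
  rw [hsplit, card_union_of_disjoint hdisj, Fin.card_Iic]

theorem sum_min_succ [Fintype ι] (p : ι → ℕ) (m : ℕ) :
    ∑ i, min (p i) (m + 1) = ∑ i, min (p i) m + #{i | m + 1 ≤ p i} := by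
  rw [card_filter, ← sum_add_distrib]
  refine sum_congr rfl fun i _ => ?_
  split_ifs <;> omega

theorem exists_antitone_map_univ_eq [LinearOrder α] (s : Multiset α) :
    ∃ (r : ℕ) (p : Fin r → α), Antitone p ∧ (univ : Finset (Fin r)).val.map p = s := by
  refine ⟨_, (s.sort (· ≥ ·)).get, (s.pairwise_sort (· ≥ ·)).sortedGE.antitone_get, ?_⟩
  rw [Fin.univ_val_map, List.ofFn_get, Multiset.sort_eq]

end FiniteSums

theorem natCard_subtype_fin_succ {α : Type*} [Finite α] {r c : ℕ} {P : (Fin (r + 1) → α) → Prop}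
    {Q : (Fin r → α) → Prop} {R : (Fin r → α) → α → Prop}
    (hP : ∀ u a, P (Fin.snoc u a) ↔ Q u ∧ R u a) (hR : ∀ u, Q u → Nat.card {a // R u a} = c) :
    Nat.card {v // P v} = Nat.card {u // Q u} * c := by
  have : Fintype {u // Q u} := Fintype.ofFinite _
  have hinit (v : {v // P v}) : Q (Fin.init v.1) ∧ R (Fin.init v.1) (v.1 (Fin.last r)) :=
    (hP _ _).1 (by rw [Fin.snoc_init_self]; exact v.2)
  let e : {v // P v} ≃ Σ u : {u // Q u}, {a // R u.1 a} :=
    { toFun v := ⟨⟨Fin.init v.1, (hinit v).1⟩, ⟨v.1 (Fin.last r), (hinit v).2⟩⟩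
      invFun w := ⟨Fin.snoc w.1.1 w.2.1, (hP _ _).2 ⟨w.1.2, w.2.2⟩⟩
      left_inv v := Subtype.ext (Fin.snoc_init_self v.1)
      right_inv w := Sigma.subtype_ext (Subtype.ext (Fin.init_snoc (α := fun _ => α) ..))
        (Fin.snoc_last (α := fun _ => α) ..) }
  rw [Nat.card_congr e, Nat.card_sigma, sum_congr rfl fun u _ => hR u.1 u.2, sum_const,
    card_univ, smul_eq_mul, Nat.card_eq_fintype_card]

section Counting

variable {K V W : Type*} [DivisionRing K] [AddCommGroup V] [Module K V]
  [AddCommGroup W] [Module K W]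

theorem finrank_comap_of_le_range [FiniteDimensional K V] {f : V →ₗ[K] W} {S : Submodule K W}
    (hS : S ≤ LinearMap.range f) :
    finrank K (S.comap f) = finrank K (LinearMap.ker f) + finrank K S := by
  have hker : LinearMap.ker f ≤ S.comap f := LinearMap.ker_le_comap f
  rw [← LinearMap.finrank_range_add_finrank_ker (f.domRestrict (S.comap f)),
    LinearMap.range_domRestrict, LinearMap.ker_domRestrict, Submodule.map_comap_eq,
    inf_eq_right.2 hS, (Submodule.comapSubtypeEquivOfLe hker).finrank_eq, add_comm]

theorem natCard_apply_mem_and_notMem [Finite K] [FiniteDimensional K V] {f : V →ₗ[K] W}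
    {B S : Submodule K W} (hSB : S ≤ B) (hS : S ≤ LinearMap.range f) :
    Nat.card {v // f v ∈ B ∧ f v ∉ S} =
      Nat.card K ^ finrank K (B.comap f) -
        Nat.card K ^ (finrank K (LinearMap.ker f) + finrank K S) := by
  have : Finite V := Module.finite_of_finite K
  have hcard (U : Submodule K V) : Nat.card K ^ finrank K U = (U : Set V).ncard :=
    Module.natCard_eq_pow_finrank.symm
  rw [← finrank_comap_of_le_range hS, hcard, hcard,
    ← Set.ncard_sdiff (Submodule.comap_mono hSB) (Set.toFinite _)]
  rfl

/-- The vectors `v i` are chosen one after the other: the `i`-th one must avoid the preimage under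
`f i` of the span of the previous images, and monotonicity of the flag `B i ⊓ range (f i)` makes
the size of that preimage independent of the earlier choices. -/
theorem natCard_linearIndependent_apply_of_monotone [Finite K] [FiniteDimensional K V] {r : ℕ}
    (f : Fin r → V →ₗ[K] W) (B : Fin r → Submodule K W)
    (hmono : Monotone fun i => B i ⊓ LinearMap.range (f i)) :
    Nat.card {v : Fin r → V // (∀ i, f i (v i) ∈ B i) ∧
        LinearIndependent K fun i => f i (v i)} =
      ∏ i, (Nat.card K ^ finrank K ((B i).comap (f i)) -
        Nat.card K ^ (finrank K (LinearMap.ker (f i)) + i)) := by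
  have : Finite V := Module.finite_of_finite K
  induction r with
  | zero =>
    simp
  | succ r ih =>
    rw [Fin.prod_univ_castSucc, natCard_subtype_fin_succ
      (Q := fun u => (∀ i, f i.castSucc (u i) ∈ B i.castSucc) ∧
        LinearIndependent K fun i => f i.castSucc (u i))
      (R := fun u a => f (Fin.last r) a ∈ B (Fin.last r) ∧
        f (Fin.last r) a ∉
          Submodule.span K (Set.range fun i => f i.castSucc (u i)))]
    · exact congrArg (· * _) <| ih (fun i => f i.castSucc) (fun i => B i.castSucc)
        fun i j hij => hmono (Fin.castSucc_le_castSucc_iff.2 hij)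
    · intro u a
      have hsnoc : (fun i => f i (Fin.snoc (α := fun _ => V) u a i)) =
          Fin.snoc (α := fun _ => W) (fun i => f i.castSucc (u i)) (f (Fin.last r) a) := by
        ext i
        refine Fin.lastCases ?_ (fun i => ?_) i <;> simp
      rw [hsnoc, linearIndependent_finSnoc, Fin.forall_fin_succ']
      simp only [Fin.snoc_castSucc, Fin.snoc_last]
      tauto
    · rintro u ⟨hu, hli⟩
      have hspan : Submodule.span K (Set.range fun i => f i.castSucc (u i)) ≤
          B (Fin.last r) ⊓ LinearMap.range (f (Fin.last r)) := by
        rw [Submodule.span_le]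
        rintro _ ⟨i, rfl⟩
        exact hmono (Fin.le_last i.castSucc) ⟨hu i, u i, rfl⟩
      rw [natCard_apply_mem_and_notMem (hspan.trans inf_le_left) (hspan.trans inf_le_right),
        finrank_span_eq_card hli, Fintype.card_fin, Fin.val_last]

end Counting

/-- A family `v` generates Jordan chains `v i, x (v i), …, x ^ (p i - 1) (v i)` of lengths `p i`
for `x` if each chain dies after `p i` steps and the ends of the chains are linearly
independent. -/
structure IsJordanSystem {R M ι : Type*} [Ring R] [AddCommGroup M] [Module R M]
    (x : M →ₗ[R] M) (p : ι → ℕ) (v : ι → M) : Prop where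
  pow_apply_eq_zero (i : ι) : (x ^ p i) (v i) = 0
  linearIndependent : LinearIndependent R fun i => (x ^ (p i - 1)) (v i)

theorem isJordanSystem_iff {R M ι : Type*} [Ring R] [AddCommGroup M] [Module R M]
    {x : M →ₗ[R] M} {p : ι → ℕ} {v : ι → M} :
    IsJordanSystem x p v ↔
      (∀ i, (x ^ p i) (v i) = 0) ∧ LinearIndependent R fun i => (x ^ (p i - 1)) (v i) :=
  ⟨fun h => ⟨h.pow_apply_eq_zero, h.linearIndependent⟩, fun h => ⟨h.1, h.2⟩⟩

namespace IsJordanSystem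

section Ring

variable {R M ι : Type*} [Ring R] [AddCommGroup M] [Module R M]
  {x : M →ₗ[R] M} {p : ι → ℕ} {v : ι → M}

theorem pow_apply_eq_zero_of_le (hv : IsJordanSystem x p v) {i : ι} {k : ℕ} (hk : p i ≤ k) :
    (x ^ k) (v i) = 0 :=
  LinearMap.iterateKer x |>.monotone hk (hv.pow_apply_eq_zero i)

theorem linearIndepOn_chain_ends (hv : IsJordanSystem x p v) (k : ℕ) :
    LinearIndepOn R (fun s : Σ i, Fin (p i) => (x ^ (p s.1 - 1)) (v s.1))
      {s | p s.1 - (s.2 : ℕ) = k} := by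
  refine hv.linearIndependent.comp
    (fun s : {s : Σ i, Fin (p i) | p s.1 - (s.2 : ℕ) = k} => s.1.1) ?_
  rintro ⟨⟨i, a⟩, ha : p i - (a : ℕ) = k⟩ ⟨⟨j, b⟩, hb : p j - (b : ℕ) = k⟩ (rfl : i = j)
  have hab : a = b := Fin.ext (by omega)
  rw [Subtype.mk.injEq, hab]

/-- In a linear relation, `p i - j` measures how far `x ^ j (v i)` is from the end of its chain. If
`k` is the largest such distance occurring with a nonzero coefficient, then `x ^ (k - 1)` turns the
relation into one between the ends of distinct chains. -/
theorem linearIndependent_chains (hv : IsJordanSystem x p v) :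
    LinearIndependent R fun s : Σ i, Fin (p i) => (x ^ (s.2 : ℕ)) (v s.1) := by
  classical
  rw [linearIndependent_iff']
  intro S c hc
  by_contra! hne
  obtain ⟨s₀, hs₀, hmax⟩ := exists_max_image {s ∈ S | c s ≠ 0}
    (fun s => p s.1 - (s.2 : ℕ)) (by simpa [Finset.Nonempty] using hne)
  obtain ⟨hs₀S, hcs₀⟩ := mem_filter.1 hs₀
  set k := p s₀.1 - (s₀.2 : ℕ)
  have hkpos : 0 < k := Nat.sub_pos_of_lt s₀.2.2
  have hends : LinearIndepOn R (fun s : Σ i, Fin (p i) => (x ^ (p s.1 - 1)) (v s.1))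
      ({s ∈ S | p s.1 - (s.2 : ℕ) = k} : Finset _) :=
    (hv.linearIndepOn_chain_ends k).mono fun s hs => (mem_filter.1 hs).2
  refine hcs₀ (linearIndepOn_finset_iff.1 hends c ?_ s₀ (mem_filter.2 ⟨hs₀S, rfl⟩))
  rw [sum_filter]
  refine Eq.trans (sum_congr rfl fun s hs => ?_)
    ((map_sum (x ^ (k - 1)) _ S).symm.trans ((congrArg _ hc).trans (map_zero _)))
  rw [map_smul, ← Module.End.mul_apply, ← pow_add]
  split_ifs with hsk
  · rw [show k - 1 + s.2 = p s.1 - 1 by omega]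
  · by_cases hcs : c s = 0
    · rw [hcs, zero_smul]
    · have := hmax s (mem_filter.2 ⟨hs, hcs⟩)
      rw [hv.pow_apply_eq_zero_of_le (by omega), smul_zero]

theorem map {N : Type*} [AddCommGroup N] [Module R N] {y : N →ₗ[R] N} {g : M →ₗ[R] N}
    (hv : IsJordanSystem x p v) (hgx : g ∘ₗ x = y ∘ₗ g) (hg : LinearMap.ker g = ⊥) :
    IsJordanSystem y p (g ∘ v) := by
  have hpow (k : ℕ) (u : M) : (y ^ k) (g u) = g ((x ^ k) u) :=
    LinearMap.congr_fun (Module.End.commute_pow_left_of_commute hgx.symm k) u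
  refine ⟨fun i => ?_, ?_⟩
  · rw [Function.comp_apply, hpow, hv.pow_apply_eq_zero, map_zero]
  · simp only [Function.comp_apply, hpow]
    exact hv.linearIndependent.map' g hg

end Ring

section DivisionRing

variable {K V W ι : Type*} [DivisionRing K] [AddCommGroup V] [Module K V] [FiniteDimensional K V]
  [AddCommGroup W] [Module K W] [FiniteDimensional K W] [Fintype ι]
  {x : Module.End K V} {y : Module.End K W} {p : ι → ℕ} {v : ι → V} {w : ι → W}

/-- The basis of `V` made of all the vectors in the Jordan chains of a Jordan system, provided
that the lengths of the chains add up to the dimension of `V`. -/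
noncomputable def basis (hv : IsJordanSystem x p v) (hp : ∑ i, p i = finrank K V) :
    Basis (Σ i, Fin (p i)) K V :=
  Basis.mk hv.linearIndependent_chains
    (hv.linearIndependent_chains.span_eq_top_of_card_eq_finrank' (by simp [hp])).ge

theorem basis_apply (hv : IsJordanSystem x p v) (hp : ∑ i, p i = finrank K V)
    (s : Σ i, Fin (p i)) : hv.basis hp s = (x ^ (s.2 : ℕ)) (v s.1) :=
  Basis.mk_apply ..

/-- The linear isomorphism carrying the chains of one Jordan system to those of another one with
the same chain lengths. -/
noncomputable def chainEquiv (hv : IsJordanSystem x p v) (hw : IsJordanSystem y p w)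
    (hpV : ∑ i, p i = finrank K V) (hpW : ∑ i, p i = finrank K W) : V ≃ₗ[K] W :=
  (hv.basis hpV).equiv (hw.basis hpW) (Equiv.refl _)

section chainEquiv

variable (hv : IsJordanSystem x p v) (hw : IsJordanSystem y p w)
  (hpV : ∑ i, p i = finrank K V) (hpW : ∑ i, p i = finrank K W)

theorem chainEquiv_pow_apply (i : ι) (k : ℕ) :
    hv.chainEquiv hw hpV hpW ((x ^ k) (v i)) = (y ^ k) (w i) := by
  rcases lt_or_ge k (p i) with hk | hk
  · simpa [chainEquiv, basis_apply] using
      (hv.basis hpV).equiv_apply ⟨i, k, hk⟩ (hw.basis hpW) (Equiv.refl _)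
  · rw [hv.pow_apply_eq_zero_of_le hk, hw.pow_apply_eq_zero_of_le hk, map_zero]

theorem chainEquiv_comp :
    (hv.chainEquiv hw hpV hpW).toLinearMap ∘ₗ x = y ∘ₗ (hv.chainEquiv hw hpV hpW).toLinearMap := by
  refine (hv.basis hpV).ext fun s => ?_
  simp only [basis_apply, LinearMap.comp_apply, LinearEquiv.coe_coe, chainEquiv_pow_apply]
  rw [← Module.End.mul_apply, ← pow_succ', chainEquiv_pow_apply, pow_succ', Module.End.mul_apply]

theorem chainEquiv_unique {g : V ≃ₗ[K] W} (hg : g.toLinearMap ∘ₗ x = y ∘ₗ g.toLinearMap)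
    (hgv : ∀ i, g (v i) = w i) : hv.chainEquiv hw hpV hpW = g := by
  refine LinearEquiv.toLinearMap_injective ((hv.basis hpV).ext fun s => ?_)
  have hpow := LinearMap.congr_fun
    (Module.End.commute_pow_left_of_commute hg.symm s.2) (v s.1)
  simp only [LinearMap.comp_apply, LinearEquiv.coe_coe] at hpow
  rw [basis_apply, LinearEquiv.coe_coe, LinearEquiv.coe_coe, chainEquiv_pow_apply, ← hpow, hgv]

end chainEquiv

/-- Once a Jordan system `v` is fixed, the elements of the centralizer of `x` in `GL(V)` correspond
to Jordan systems with the same chain lengths, `g` being determined by the images of the `v i`. -/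
noncomputable def centralizerEquiv (hv : IsJordanSystem x p v) (hp : ∑ i, p i = finrank K V) :
    {g : V ≃ₗ[K] V // g.toLinearMap ∘ₗ x = x ∘ₗ g.toLinearMap} ≃ {w // IsJordanSystem x p w} where
  toFun g := ⟨g.1 ∘ v, hv.map g.2 g.1.ker⟩
  invFun w := ⟨hv.chainEquiv w.2 hp hp, hv.chainEquiv_comp w.2 hp hp⟩
  left_inv g := Subtype.ext (hv.chainEquiv_unique _ hp hp g.2 fun _ => rfl)
  right_inv w := Subtype.ext (funext fun i => by
    simpa using hv.chainEquiv_pow_apply w.2 hp hp i 0)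

end DivisionRing

end IsJordanSystem

theorem antitone_ker_inf_range_pow {R M : Type*} [Semiring R] [AddCommMonoid M] [Module R M]
    (x : Module.End R M) : Antitone fun k => LinearMap.ker x ⊓ LinearMap.range (x ^ k) :=
  fun _ _ h => inf_le_inf_left _ (LinearMap.iterateRange x |>.monotone h)

theorem cast_pow_add_sub_pow {F : Type*} [Field F] {q : ℕ} (hq : (q : F) ≠ 0) (a b : ℕ) :
    ((q ^ (a + b) - q ^ a : ℕ) : F) = q ^ (a + b) * (1 - (q : F)⁻¹ ^ b) := by
  have hq' : 0 < q := Nat.pos_of_ne_zero fun h => hq (by rw [h, Nat.cast_zero])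
  rw [Nat.cast_sub (Nat.pow_le_pow_right hq' le_self_add), Nat.cast_pow, Nat.cast_pow, pow_add,
    mul_sub, mul_one, mul_assoc, ← mul_pow, mul_inv_cancel₀ hq, one_pow, mul_one]

section JordanType

variable {K V : Type*} [DivisionRing K] [Finite K] [AddCommGroup V] [Module K V]
  [FiniteDimensional K V] {x : Module.End K V} {r : ℕ} {p : Fin r → ℕ}

theorem natCard_isJordanSystem (hp : Antitone p) (hpos : ∀ i, 0 < p i) :
    Nat.card {v // IsJordanSystem x p v} =
      ∏ i, (Nat.card K ^ finrank K (LinearMap.ker (x ^ p i)) -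
        Nat.card K ^ (finrank K (LinearMap.ker (x ^ (p i - 1))) + i)) := by
  have hker (i) : LinearMap.ker (x ^ p i) = (LinearMap.ker x).comap (x ^ (p i - 1)) := by
    rw [← LinearMap.ker_comp, ← Module.End.mul_eq_comp, ← pow_succ', Nat.sub_add_cancel (hpos i)]
  have hmem (v : Fin r → V) (i) :
      (x ^ p i) (v i) = 0 ↔ (x ^ (p i - 1)) (v i) ∈ LinearMap.ker x := by
    rw [← LinearMap.mem_ker, hker, Submodule.mem_comap]
  have hmono : Monotone fun i => LinearMap.ker x ⊓ LinearMap.range (x ^ (p i - 1)) :=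
    (antitone_ker_inf_range_pow x).comp fun _ _ h => Nat.sub_le_sub_right (hp h) 1
  simp only [isJordanSystem_iff, hmem]
  rw [natCard_linearIndependent_apply_of_monotone _ (fun _ => LinearMap.ker x) hmono]
  exact prod_congr rfl fun i _ => by rw [hker]

theorem natCard_isJordanSystem_of_finrank_ker_pow (hp : Antitone p) (hpos : ∀ i, 0 < p i)
    (hx : ∀ k, finrank K (LinearMap.ker (x ^ k)) = ∑ i, min (p i) k) :
    (Nat.card {v // IsJordanSystem x p v} : ℚ) =
      (Nat.card K : ℚ) ^ (∑ i, ∑ j, min (p i) (p j)) *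
        ∏ i, (1 - (Nat.card K : ℚ)⁻¹ ^ (#{j | p j = p i ∧ i < j} + 1)) := by
  have hrank (i) : finrank K (LinearMap.ker (x ^ p i)) =
      finrank K (LinearMap.ker (x ^ (p i - 1))) + i + (#{j | p j = p i ∧ i < j} + 1) := by
    have hsum := sum_min_succ p (p i - 1)
    rw [Nat.sub_add_cancel (hpos i), card_filter_ge_of_antitone hp i] at hsum
    rw [hx, hx, hsum]
    ring
  have hfactor (i : Fin r) :
      ((Nat.card K ^ finrank K (LinearMap.ker (x ^ p i)) -
        Nat.card K ^ (finrank K (LinearMap.ker (x ^ (p i - 1))) + i) : ℕ) : ℚ) =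
      (Nat.card K : ℚ) ^ (∑ j, min (p i) (p j)) *
        (1 - (Nat.card K : ℚ)⁻¹ ^ (#{j | p j = p i ∧ i < j} + 1)) := by
    have hexp : ∑ j, min (p i) (p j) = finrank K (LinearMap.ker (x ^ p i)) := by
      simp only [hx, min_comm]
    rw [hexp, hrank i, cast_pow_add_sub_pow (Nat.cast_ne_zero.2 Nat.card_pos.ne')]
  rw [natCard_isJordanSystem hp hpos, Nat.cast_prod, prod_congr rfl fun i _ => hfactor i,
    prod_mul_distrib, prod_pow_eq_pow_sum]

theorem natCard_centralizer_of_finrank_ker_pow (hp : Antitone p) (hpos : ∀ i, 0 < p i)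
    (hsum : ∑ i, p i = finrank K V)
    (hx : ∀ k, finrank K (LinearMap.ker (x ^ k)) = ∑ i, min (p i) k) :
    (Nat.card {g : V ≃ₗ[K] V // g.toLinearMap ∘ₗ x = x ∘ₗ g.toLinearMap} : ℚ) =
      (Nat.card K : ℚ) ^ (∑ i, ∑ j, min (p i) (p j)) *
        ∏ i, (1 - (Nat.card K : ℚ)⁻¹ ^ (#{j | p j = p i ∧ i < j} + 1)) := by
  have hcard := natCard_isJordanSystem_of_finrank_ker_pow hp hpos hx
  have hq : 1 < (Nat.card K : ℚ) := Nat.one_lt_cast.2 Finite.one_lt_card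
  have hcard_pos : (0 : ℚ) < Nat.card {v // IsJordanSystem x p v} := by
    rw [hcard]
    refine mul_pos (by positivity) (prod_pos fun i _ => sub_pos.2 ?_)
    exact pow_lt_one₀ (by positivity) (inv_lt_one_of_one_lt₀ hq) (Nat.succ_ne_zero _)
  obtain ⟨⟨v, hv⟩⟩ := (Nat.card_pos_iff.1 (Nat.cast_pos.1 hcard_pos)).1
  rw [Nat.card_congr (hv.centralizerEquiv hsum), hcard]

end JordanType

/-- The order of the centralizer in `GL(V)` of a nilpotent endomorphism of Jordan type `λ`
equals `q^{⟨λ,λ⟩} ∏_k ∏_{j=1}^{m_k(λ)} (1 − q^{-j})`. -/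
theorem card_centralizer_nilpotent
    (K : Type*) [Field K] [Fintype K]
    (V : Type*) [AddCommGroup V] [Module K V] [FiniteDimensional K V]
    (n : ℕ) (h : Module.finrank K V = n)
    (lam : Nat.Partition n)
    (x : Module.End K V) (hx : HasJordanType x lam) :
    (Nat.card {g : V ≃ₗ[K] V //
        g.toLinearMap ∘ₗ x = x ∘ₗ g.toLinearMap} : ℚ) =
      (Fintype.card K : ℚ) ^ partitionPairing lam.parts lam.parts *
        ∏ k ∈ Finset.range (n + 1), ∏ j ∈ Finset.range (lam.parts.count k),
          (1 - ((Fintype.card K : ℚ))⁻¹ ^ (j + 1)) := by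
  obtain ⟨r, p, hp, hparts⟩ := exists_antitone_map_univ_eq lam.parts
  have hsum (F : ℕ → ℕ) : (lam.parts.map F).sum = ∑ i, F (p i) := by
    rw [← hparts, Multiset.map_map]; rfl
  have hcount (k : ℕ) : lam.parts.count k = #{i | p i = k} := by
    rw [← hparts, Multiset.count_map]
    simp only [eq_comm (a := k)]
    rfl
  have hmem (i : Fin r) : p i ∈ lam.parts := hparts ▸ Multiset.mem_map_of_mem p (mem_univ_val i)
  have hn : ∑ i, p i = finrank K V := by
    rw [h, ← lam.parts_sum, ← hsum fun a => a, Multiset.map_id']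
  have hle (i : Fin r) : p i ∈ range (n + 1) :=
    mem_range_succ_iff.2 (lam.le_of_mem_parts (hmem i))
  rw [natCard_centralizer_of_finrank_ker_pow hp (fun i => lam.parts_pos (hmem i)) hn
    fun k => (hx.2 k).trans (hsum _), Nat.card_eq_fintype_card,
    prod_card_filter_eq_lt_eq_prod_fiberwise (fun m => 1 - (Fintype.card K : ℚ)⁻¹ ^ (m + 1)) p hle]
  simp only [partitionPairing, hsum, hcount]
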